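/- For a real number u and a natural number j, define f_j^u(x) = \frac{(-1)^j}{j!} \prod_{i=0}^{j-1} (x - i(u+i)). For real \alpha, c, N, define the normalized dual Hahn polynomials h^{*,\alpha,c,N}_n(x) = \frac{1}{n!} \sum_{j=0}^n (-n)_j (1-N+j)_{n-j} (c+j)_{n-j} \, f_j^{\alpha+c-N}(x), the quadratic map \lambda^{\alpha,c,N}(x) = x(x+\alpha+c-N), and the normalized Casorati dual Hahn determinant H^{*,\alpha,c,N}_{n,m,x} = \det\big( h^{*,\alpha,c,N}_{m+j-1}(\lambda^{\alpha,c,N}(x+i-1)) \big)_{i,j=1}^n \big/ \prod_{l=1}^{n-1} (2x+\alpha+c-N+l)_l. Let n, m be natural numbers and x, \alpha, c, N real numbers such that \prod_{l=1}^{n-1} (2x+\alpha+c-N-n-m+l)_l \ne 0 and \prod_{l=1}^{m-1} (-2x+2-(\alpha+c-N)+l)_l \ne 0. Then: H^{*, \, \alpha+n+m, \, c-n-m, \, N+n+m}_{n,m,x} = H^{*, \, -\alpha, \, 2-c, \, -N}_{m,n,-x}. -/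

import Mathlib

/-- The Pochhammer symbol `(y)_l = y (y+1) ⋯ (y+l-1)`. -/
noncomputable def poch (y : ℝ) (l : ℕ) : ℝ := ∏ k ∈ Finset.range l, (y + k)

/-- The polynomial `f_j^u(x) = ((-1)^j/j!) ∏_{i=0}^{j-1} (x - i(u+i))`. -/
noncomputable def fpol (u : ℝ) (j : ℕ) (x : ℝ) : ℝ :=
  ((-1 : ℝ) ^ j / j.factorial) * ∏ i ∈ Finset.range j, (x - i * (u + i))

/-- The normalized dual Hahn polynomial
`h^{*,α,c,N}_n(x) = (1/n!) ∑_{j=0}^n (-n)_j (1-N+j)_{n-j} (c+j)_{n-j} f_j^{α+c-N}(x)`. -/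
noncomputable def dualHahn (α c N : ℝ) (n : ℕ) (x : ℝ) : ℝ :=
  (1 / n.factorial) * ∑ j ∈ Finset.range (n + 1),
    poch (-(n : ℝ)) j * poch (1 - N + j) (n - j) * poch (c + j) (n - j) *
      fpol (α + c - N) j x

/-- The normalized Casorati dual Hahn determinant `H^{*,α,c,N}_{n,m,x}`. -/
noncomputable def dualHahnCasorati (α c N : ℝ) (n m : ℕ) (x : ℝ) : ℝ :=
  Matrix.det (Matrix.of fun i j : Fin n =>
    dualHahn α c N (m + (j : ℕ)) ((x + (i : ℕ)) * (x + (i : ℕ) + α + c - N))) /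
  ∏ l ∈ Finset.Icc 1 (n - 1), poch (2 * x + α + c - N + l) l

/-!
Divided by its leading factor, the forward difference of a dual Hahn polynomial along the quadratic
lattice is again a dual Hahn polynomial, of one degree less and with shifted parameters. Newton
expansion at `x` therefore turns the normalized Casorati determinant into a minor of a unipotent
upper triangular matrix whose entries are dual Hahn polynomials at the single node `x`. A
convolution identity says that, up to checkerboard signs and reversal of the indices, the inverse of
this matrix is the matrix of the same kind for the dual parameters at `-x`. The two sides of the
symmetry are thus complementary minors of mutually inverse matrices, and Jacobi's identity equates
them.
-/

open Finset Matrix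

section Antidiagonal

theorem sum_antidiagonal_interchange {M : Type*} [AddCommMonoid M] (f : ℕ → ℕ → ℕ → ℕ → M)
    (d : ℕ) :
    ∑ k ∈ antidiagonal d, ∑ a ∈ antidiagonal k.1, ∑ b ∈ antidiagonal k.2, f a.1 a.2 b.1 b.2 =
      ∑ k ∈ antidiagonal d, ∑ a ∈ antidiagonal k.1, ∑ b ∈ antidiagonal k.2,
        f a.1 b.1 a.2 b.2 := by
  simp only [← sum_product', sum_sigma']
  let φ (t : (_ : ℕ × ℕ) × (ℕ × ℕ) × ℕ × ℕ) : (_ : ℕ × ℕ) × (ℕ × ℕ) × ℕ × ℕ :=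
    ⟨(t.2.1.1 + t.2.2.1, t.2.1.2 + t.2.2.2), (t.2.1.1, t.2.2.1), (t.2.1.2, t.2.2.2)⟩
  let S := (antidiagonal d).sigma fun k ↦ antidiagonal k.1 ×ˢ antidiagonal k.2
  have hmem : ∀ t ∈ S, φ t ∈ S := by
    intro t ht
    simp only [S, φ, mem_sigma, mem_product, HasAntidiagonal.mem_antidiagonal, and_true] at ht ⊢
    omega
  have hinv : ∀ t ∈ S, φ (φ t) = t := by
    rintro ⟨⟨k, l⟩, a, b⟩ ht
    simp only [S, mem_sigma, mem_product, HasAntidiagonal.mem_antidiagonal] at ht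
    simp only [φ, ht.2]
  exact sum_nbij' φ φ hmem hmem hinv hinv fun _ _ ↦ rfl

theorem sum_antidiagonal_pow_div_factorial {K : Type*} [Field K] [CharZero K] (x y : K) (n : ℕ) :
    ∑ p ∈ antidiagonal n, x ^ p.1 / p.1.factorial * (y ^ p.2 / p.2.factorial) =
      (x + y) ^ n / n.factorial := by
  rw [(Commute.all x y).add_pow', sum_div]
  refine sum_congr rfl fun p hp ↦ ?_
  obtain rfl := HasAntidiagonal.mem_antidiagonal.mp hp
  have hn : ((p.1 + p.2).factorial : K) ≠ 0 := Nat.cast_ne_zero.mpr (Nat.factorial_ne_zero _)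
  rw [nsmul_eq_mul, Nat.cast_add_choose]
  field_simp

theorem sum_fin_toeplitz_mul {R : Type*} [NonUnitalNonAssocSemiring R] (f g : ℕ → R) {L : ℕ}
    {i l : Fin L} (hil : i ≤ l) :
    ∑ k, (if i ≤ k then f (k - i) else 0) * (if k ≤ l then g (l - k) else 0) =
      ∑ p ∈ antidiagonal (l - i : ℕ), f p.1 * g p.2 := by
  have hsub : Ico (i : ℕ) (l + 1) ⊆ range L := fun k hk ↦ by
    simp only [mem_Ico, mem_range] at hk ⊢
    omega
  simp only [Fin.le_def]
  rw [Fin.sum_univ_eq_sum_range fun k ↦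
      (if (i : ℕ) ≤ k then f (k - i) else 0) * if k ≤ (l : ℕ) then g (l - k) else 0,
    Nat.sum_antidiagonal_eq_sum_range_succ (fun p q ↦ f p * g q), ← Nat.succ_sub hil,
    ← sum_subset hsub, sum_Ico_eq_sum_range]
  · refine sum_congr rfl fun p hp ↦ ?_
    rw [mem_range] at hp
    rw [if_pos (by omega), if_pos (by omega), Nat.add_sub_cancel_left, Nat.sub_sub]
  · intro k _ hk
    rcases lt_or_ge k i with hki | hki
    · rw [if_neg hki.not_ge, zero_mul]
    · rw [if_neg fun hkl ↦ hk (mem_Ico.mpr ⟨hki, Nat.lt_succ_of_le hkl⟩), mul_zero]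

end Antidiagonal

section Pochhammer

theorem poch_zero (y : ℝ) : poch y 0 = 1 := prod_range_zero _

theorem poch_succ (y : ℝ) (l : ℕ) : poch y (l + 1) = poch y l * (y + l) := prod_range_succ _ _

theorem poch_add (y : ℝ) (p q : ℕ) : poch y (p + q) = poch y p * poch (y + p) q := by
  simp only [poch, prod_range_add, Nat.cast_add, add_assoc]

theorem poch_one (y : ℝ) : poch y 1 = y := by simp [poch]

theorem poch_succ' (y : ℝ) (l : ℕ) : poch y (l + 1) = y * poch (y + 1) l := by
  rw [add_comm l, poch_add, poch_one, Nat.cast_one]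

theorem poch_reflect (y : ℝ) (l : ℕ) : poch y l = (-1) ^ l * poch (1 - y - l) l := by
  induction l with
  | zero => simp [poch_zero]
  | succ l ih =>
    rw [poch_succ, ih, poch_succ',
      show 1 - y - ((l + 1 : ℕ) : ℝ) + 1 = 1 - y - l by push_cast; ring]
    push_cast
    ring

theorem poch_eq_ascPochhammer_eval (y : ℝ) (l : ℕ) : poch y l = (ascPochhammer ℝ l).eval y := by
  induction l with
  | zero => simp [poch_zero]
  | succ l ih => rw [poch_succ, ascPochhammer_succ_eval, ih]

theorem poch_neg_eq_choose (y : ℝ) (l : ℕ) :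
    poch (-y) l = (-1) ^ l * (l.factorial * Ring.choose y l) := by
  rw [poch_eq_ascPochhammer_eval, ← Polynomial.ascPochhammer_smeval_eq_eval,
    Polynomial.ascPochhammer_smeval_neg_eq_descPochhammer,
    Ring.descPochhammer_eq_factorial_smul_choose, nsmul_eq_mul, Int.negOnePow_def]
  simp [Units.smul_def]

theorem poch_neg_natCast (p j : ℕ) :
    poch (-((p + j : ℕ) : ℝ)) j = (-1) ^ j * (p + j).factorial / p.factorial := by
  rw [poch_neg_eq_choose, Ring.choose_natCast, add_comm p, Nat.cast_add_choose]
  field_simp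

theorem sum_antidiagonal_poch_neg_mul_poch (y : ℝ) (d : ℕ) :
    ∑ p ∈ antidiagonal d, poch (-y) p.1 / p.1.factorial * (poch y p.2 / p.2.factorial) =
      if d = 0 then 1 else 0 := by
  have hterm : ∀ p ∈ antidiagonal d,
      poch (-y) p.1 / p.1.factorial * (poch y p.2 / p.2.factorial) =
        (-1) ^ d * (Ring.choose y p.1 * Ring.choose (-y) p.2) := fun p hp ↦ by
    have hneg := poch_neg_eq_choose (-y) p.2
    rw [neg_neg] at hneg
    rw [poch_neg_eq_choose, hneg, ← HasAntidiagonal.mem_antidiagonal.mp hp, pow_add]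
    field_simp
  rw [sum_congr rfl hterm, ← mul_sum, ← Ring.add_choose_eq d (Commute.all y (-y)), add_neg_cancel,
    Ring.choose_zero_ite]
  split_ifs with hd <;> simp [hd]

end Pochhammer

section DualHahn

/-- The coefficient `(1-N+j)_r (c+j)_r / r!` of `(-1)^j f_j^{α+c-N}` in the dual Hahn polynomial of
degree `j + r`. -/
noncomputable def dualHahnCoeff (c N : ℝ) (j r : ℕ) : ℝ :=
  poch (1 - N + j) r * poch (c + j) r / r.factorial

/-- The dual Hahn polynomial `h^{*,α,c,N}_n` at the node `λ^{α,c,N}(x) = x (x + α + c - N)`, as a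
function of the lattice variable `x`. -/
noncomputable def latticeDualHahn (α c N : ℝ) (n : ℕ) (x : ℝ) : ℝ :=
  dualHahn α c N n (x * (x + α + c - N))

variable (α c N u x : ℝ)

theorem dualHahn_eq_sum (n : ℕ) :
    dualHahn α c N n x =
      ∑ p ∈ antidiagonal n, (-1) ^ p.2 * dualHahnCoeff c N p.2 p.1 * fpol (α + c - N) p.2 x := by
  rw [dualHahn, ← Nat.sum_antidiagonal_eq_sum_range_succ fun j r ↦
    poch (-(n : ℝ)) j * poch (1 - N + j) r * poch (c + j) r * fpol (α + c - N) j x,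
    ← Nat.sum_antidiagonal_swap, mul_sum]
  refine sum_congr rfl fun p hp ↦ ?_
  obtain rfl := HasAntidiagonal.mem_antidiagonal.mp hp
  simp only [Prod.fst_swap, Prod.snd_swap, poch_neg_natCast, dualHahnCoeff]
  have hn : ((p.1 + p.2).factorial : ℝ) ≠ 0 := Nat.cast_ne_zero.mpr (Nat.factorial_ne_zero _)
  field_simp

theorem fpol_lattice (j : ℕ) :
    fpol u j (x * (x + u)) = poch (-x) j * poch (x + u) j / j.factorial := by
  have hprod : (-1) ^ j * ∏ i ∈ range j, (x * (x + u) - i * (u + i)) =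
      poch (-x) j * poch (x + u) j := by
    induction j with
    | zero => simp [poch_zero]
    | succ j ih =>
      rw [prod_range_succ, poch_succ, poch_succ, pow_succ]
      linear_combination -(x * (x + u) - j * (u + j)) * ih
  rw [fpol, ← hprod]
  ring

theorem latticeDualHahn_eq_sum (n : ℕ) :
    latticeDualHahn α c N n x =
      ∑ p ∈ antidiagonal n, (-1) ^ p.2 * dualHahnCoeff c N p.2 p.1 *
        fpol (α + c - N) p.2 (x * (x + (α + c - N))) := by
  rw [latticeDualHahn, dualHahn_eq_sum, ← add_sub_assoc, ← add_assoc]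

section Orthogonality

theorem dualHahnCoeff_mul_dualHahnCoeff (j i r s : ℕ) :
    dualHahnCoeff c N j r *
        dualHahnCoeff (1 - c - (j + i + (r + s) : ℕ)) (1 + (j + i + (r + s) : ℕ) - N) i s =
      poch (1 - N + j) (r + s) * poch (c + j) (r + s) / (r.factorial * s.factorial) := by
  have hN : poch (1 - (1 + (j + i + (r + s) : ℕ) - N) + i) s =
      (-1) ^ s * poch (1 - N + j + r) s := by
    rw [poch_reflect]
    congr 2
    push_cast
    ring
  have hc : poch (1 - c - (j + i + (r + s) : ℕ) + i) s = (-1) ^ s * poch (c + j + r) s := by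
    rw [poch_reflect]
    congr 2
    push_cast
    ring
  rw [dualHahnCoeff, dualHahnCoeff, hN, hc, poch_add, poch_add, div_mul_div_comm]
  congr 1
  linear_combination (poch (1 - N + j) r * poch (c + j) r * poch (1 - N + j + r) s *
    poch (c + j + r) s) * (Even.neg_one_pow ⟨s, rfl⟩ : (-1 : ℝ) ^ (s + s) = 1)

theorem sum_antidiagonal_dualHahnCoeff_mul (j i q : ℕ) :
    ∑ p ∈ antidiagonal q, (-1) ^ p.1 * dualHahnCoeff c N j p.1 *
        dualHahnCoeff (1 - c - (j + i + q : ℕ)) (1 + (j + i + q : ℕ) - N) i p.2 =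
      if q = 0 then 1 else 0 := by
  have hterm : ∀ p ∈ antidiagonal q, (-1) ^ p.1 * dualHahnCoeff c N j p.1 *
        dualHahnCoeff (1 - c - (j + i + q : ℕ)) (1 + (j + i + q : ℕ) - N) i p.2 =
      poch (1 - N + j) q * poch (c + j) q *
        ((-1) ^ p.1 / p.1.factorial * (1 ^ p.2 / p.2.factorial)) := fun p hp ↦ by
    rw [← HasAntidiagonal.mem_antidiagonal.mp hp, mul_assoc, dualHahnCoeff_mul_dualHahnCoeff]
    ring
  rw [sum_congr rfl hterm, ← mul_sum, sum_antidiagonal_pow_div_factorial, neg_add_cancel,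
    zero_pow_eq]
  split_ifs with hq <;> simp [hq, poch_zero]

theorem sum_antidiagonal_fpol_mul_fpol (d : ℕ) :
    ∑ p ∈ antidiagonal d, (-1) ^ p.2 * fpol u p.1 (x * (x + u)) *
        fpol (1 - d - u) p.2 (-x * (-x + (1 - d - u))) =
      if d = 0 then 1 else 0 := by
  have hterm : ∀ p ∈ antidiagonal d, (-1) ^ p.2 * fpol u p.1 (x * (x + u)) *
        fpol (1 - d - u) p.2 (-x * (-x + (1 - d - u))) =
      poch (x + u) d * (poch (-x) p.1 / p.1.factorial * (poch x p.2 / p.2.factorial)) :=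
    fun p hp ↦ by
    obtain rfl := HasAntidiagonal.mem_antidiagonal.mp hp
    have hreflect : poch (-x + (1 - (p.1 + p.2 : ℕ) - u)) p.2 =
        (-1) ^ p.2 * poch (x + u + p.1) p.2 := by
      rw [poch_reflect]
      congr 2
      push_cast
      ring
    rw [fpol_lattice, fpol_lattice, hreflect, neg_neg, poch_add]
    linear_combination (poch (x + u) p.1 * poch (x + u + p.1) p.2 *
      (poch (-x) p.1 / p.1.factorial * (poch x p.2 / p.2.factorial))) *
      (Even.neg_one_pow ⟨p.2, rfl⟩ : (-1 : ℝ) ^ (p.2 + p.2) = 1)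
  rw [sum_congr rfl hterm, ← mul_sum, sum_antidiagonal_poch_neg_mul_poch]
  split_ifs with hd <;> simp [hd, poch_zero]

theorem sum_antidiagonal_latticeDualHahn_mul (d : ℕ) :
    ∑ p ∈ antidiagonal d, (-1) ^ p.1 * latticeDualHahn α c N p.1 x *
        latticeDualHahn (1 + d - α) (1 - c - d) (1 + d - N) p.2 (-x) =
      if d = 0 then 1 else 0 := by
  set u := α + c - N with hu
  have hu' : 1 + d - α + (1 - c - d) - (1 + d - N) = 1 - d - u := by ring
  let F (j i : ℕ) : ℝ := (-1) ^ i * fpol u j (x * (x + u)) *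
    fpol (1 - d - u) i (-x * (-x + (1 - d - u)))
  let C (r j s i : ℕ) : ℝ := (-1) ^ r * dualHahnCoeff c N j r *
    dualHahnCoeff (1 - c - d) (1 + d - N) i s
  calc
    _ = ∑ k ∈ antidiagonal d, ∑ a ∈ antidiagonal k.1, ∑ b ∈ antidiagonal k.2,
          F a.2 b.2 * C a.1 a.2 b.1 b.2 := by
      refine sum_congr rfl fun k _ ↦ ?_
      rw [latticeDualHahn_eq_sum, latticeDualHahn_eq_sum, ← hu, hu', mul_assoc, sum_mul_sum,
        mul_sum]
      refine sum_congr rfl fun a ha ↦ ?_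
      rw [mul_sum]
      refine sum_congr rfl fun b _ ↦ ?_
      have hsign : (-1 : ℝ) ^ k.1 * (-1) ^ a.2 = (-1) ^ a.1 := by
        rw [← HasAntidiagonal.mem_antidiagonal.mp ha, ← pow_add, add_assoc, pow_add,
          Even.neg_one_pow ⟨a.2, rfl⟩, mul_one]
      simp only [F, C, ← hsign]
      ring
    _ = ∑ k ∈ antidiagonal d, ∑ a ∈ antidiagonal k.1, ∑ b ∈ antidiagonal k.2,
          F b.1 b.2 * C a.1 b.1 a.2 b.2 :=
      sum_antidiagonal_interchange (fun r j s i ↦ F j i * C r j s i) d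
    _ = ∑ k ∈ antidiagonal d, ∑ b ∈ antidiagonal k.2, F b.1 b.2 * if k.1 = 0 then 1 else 0 := by
      refine sum_congr rfl fun k hk ↦ sum_comm.trans (sum_congr rfl fun b hb ↦ ?_)
      have hd : d = b.1 + b.2 + k.1 := by
        rw [HasAntidiagonal.mem_antidiagonal.mp hb, add_comm,
          HasAntidiagonal.mem_antidiagonal.mp hk]
      rw [← mul_sum, ← sum_antidiagonal_dualHahnCoeff_mul c N b.1 b.2, ← hd]
    _ = ∑ b ∈ antidiagonal d, F b.1 b.2 := by
      simp only [← sum_mul]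
      simp [← sum_filter, HasAntidiagonal.filter_fst_eq_antidiagonal d 0]
    _ = _ := sum_antidiagonal_fpol_mul_fpol u x d

end Orthogonality

section Newton

theorem dualHahnCoeff_succ (j r : ℕ) :
    dualHahnCoeff c N (j + 1) r = dualHahnCoeff (c + 1) (N - 1) j r := by
  rw [dualHahnCoeff, dualHahnCoeff]
  push_cast
  congr 3 <;> ring

theorem fpol_lattice_forward_difference (j : ℕ) :
    fpol u (j + 1) ((x + 1) * (x + 1 + u)) - fpol u (j + 1) (x * (x + u)) =
      -(2 * x + u + 1) * fpol (u + 1) j (x * (x + (u + 1))) := by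
  have hj : ((j + 1).factorial : ℝ) = (j + 1) * j.factorial := by
    rw [Nat.factorial_succ]; push_cast; ring
  have h₁ : poch (-(x + 1)) (j + 1) = -(x + 1) * poch (-x) j := by
    rw [poch_succ']; congr 2; ring
  rw [fpol_lattice, fpol_lattice, fpol_lattice, h₁, poch_succ (-x), poch_succ (x + 1 + u),
    poch_succ' (x + u), hj,
    show x + 1 + u = x + (u + 1) by ring,
    show x + u + 1 = x + (u + 1) by ring]
  field_simp
  ring

theorem latticeDualHahn_forward_difference (k : ℕ) :
    latticeDualHahn α c N (k + 1) (x + 1) - latticeDualHahn α c N (k + 1) x =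
      (2 * x + (α + c - N) + 1) * latticeDualHahn (α - 1) (c + 1) (N - 1) k x := by
  simp only [latticeDualHahn_eq_sum, Nat.sum_antidiagonal_succ']
  rw [show α - 1 + (c + 1) - (N - 1) = α + c - N + 1 by ring, add_sub_add_comm, ← sum_sub_distrib,
    mul_sum]
  have hconst : ∀ y, fpol (α + c - N) 0 y = 1 := fun y ↦ by simp [fpol]
  simp only [hconst, sub_self, zero_add]
  refine sum_congr rfl fun p _ ↦ ?_
  rw [← mul_sub, fpol_lattice_forward_difference, dualHahnCoeff_succ]
  ring

end Newton

end DualHahn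

section QuadraticLattice

variable {u : ℝ}

theorem choose_succ_mul_poch_succ (i s : ℕ) (z : ℝ) :
    (i + 1).choose (s + 1) * poch z (s + 1) =
      i.choose (s + 1) * poch (z + 1) (s + 1) + i.choose s * poch (z + 1) s * (z + s - i) := by
  have habsorb : (i.choose (s + 1) : ℝ) * (s + 1) = i.choose s * (i - s) := by
    rcases le_or_gt s i with hsi | his
    · rw [← Nat.cast_sub hsi]
      exact_mod_cast Nat.choose_succ_right_eq i s
    · simp [Nat.choose_eq_zero_of_lt his, Nat.choose_eq_zero_of_lt (his.trans s.lt_succ_self)]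
  rw [poch_succ', poch_succ, Nat.choose_succ_succ']
  push_cast
  linear_combination -poch (z + 1) s * habsorb

theorem quadratic_newton_expansion {g : ℕ → ℝ → ℝ}
    (hg : ∀ s x, g s (x + 1) - g s x = (2 * x + u + s + 1) * g (s + 1) x) (i : ℕ) (x : ℝ) :
    g 0 (x + i) = ∑ s ∈ range (i + 1), i.choose s * poch (2 * x + u + i) s * g s x := by
  induction i generalizing x with
  | zero => simp [poch_zero]
  | succ i ih =>
    set z := 2 * x + u + (i + 1 : ℕ) with hz
    have hz' : 2 * (x + 1) + u + i = z + 1 := by rw [hz]; push_cast; ring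
    calc
      g 0 (x + (i + 1 : ℕ)) = ∑ s ∈ range (i + 1), i.choose s * poch (z + 1) s * g s (x + 1) := by
        rw [← hz', ← ih]
        congr 1
        push_cast
        ring
      _ = ∑ s ∈ range (i + 1), i.choose s * poch (z + 1) s * g s x +
          ∑ s ∈ range (i + 1), i.choose s * poch (z + 1) s * (z + s - i) * g (s + 1) x := by
        rw [← sum_add_distrib]
        refine sum_congr rfl fun s _ ↦ ?_
        rw [eq_add_of_sub_eq (hg s x), hz]
        push_cast
        ring
      _ = ∑ s ∈ range (i + 1), (i + 1).choose (s + 1) * poch z (s + 1) * g (s + 1) x + g 0 x := by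
        have hextend : ∑ s ∈ range (i + 1), i.choose s * poch (z + 1) s * g s x =
            ∑ s ∈ range (i + 2), i.choose s * poch (z + 1) s * g s x := by
          simp [sum_range_succ _ (i + 1)]
        rw [hextend, sum_range_succ', add_right_comm, ← sum_add_distrib]
        simp only [choose_succ_mul_poch_succ, add_mul, Nat.choose_zero_right, poch_zero,
          Nat.cast_one, one_mul]
      _ = _ := by
        rw [sum_range_succ' _ (i + 1)]
        simp [poch_zero]

theorem det_quadratic_newton {n : ℕ} {g : Fin n → ℕ → ℝ → ℝ}
    (hg : ∀ j s x, g j s (x + 1) - g j s x = (2 * x + u + s + 1) * g j (s + 1) x) (x : ℝ) :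
    (of fun i j : Fin n ↦ g j 0 (x + (i : ℕ))).det =
      (∏ i : Fin n, poch (2 * x + u + (i : ℕ)) i) * (of fun i j : Fin n ↦ g j i x).det := by
  let T : Matrix (Fin n) (Fin n) ℝ :=
    of fun i s ↦ (i : ℕ).choose s * poch (2 * x + u + (i : ℕ)) s
  have hT : T.det = ∏ i : Fin n, poch (2 * x + u + (i : ℕ)) i := by
    rw [det_of_isLowerTriangular]
    · simp [T]
    · intro i s his
      have : (i : ℕ) < s := his
      simp [T, Nat.choose_eq_zero_of_lt this]
  have hmul : (of fun i j : Fin n ↦ g j 0 (x + (i : ℕ))) = T * of fun i j : Fin n ↦ g j i x := by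
    ext i j
    simp only [T, mul_apply, of_apply, quadratic_newton_expansion (hg j)]
    rw [Fin.sum_univ_eq_sum_range fun s ↦
      ((i : ℕ).choose s : ℝ) * poch (2 * x + u + (i : ℕ)) s * g j s x]
    refine sum_subset (range_subset_range.mpr i.isLt) fun s _ hs ↦ ?_
    simp [Nat.choose_eq_zero_of_lt (not_le.mp fun h ↦ hs (mem_range_succ_iff.mpr h))]
  rw [hmul, det_mul, hT]

end QuadraticLattice

section ComplementaryMinors

variable {R : Type*} [CommRing R]

theorem det_mul_det_toBlocks₂₂ {p q : Type*} [Fintype p] [Fintype q] [DecidableEq p]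
    [DecidableEq q] {A B : Matrix (p ⊕ q) (p ⊕ q) R} (h : A * B = 1) :
    A.det * B.toBlocks₂₂.det = A.toBlocks₁₁.det := by
  have hmul : A * fromBlocks 1 B.toBlocks₁₂ 0 B.toBlocks₂₂ =
      fromBlocks A.toBlocks₁₁ 0 A.toBlocks₂₁ 1 := by
    have hblocks := h
    rw [← A.fromBlocks_toBlocks, ← B.fromBlocks_toBlocks, fromBlocks_multiply, ← fromBlocks_one,
      fromBlocks_inj] at hblocks
    conv_lhs => rw [← A.fromBlocks_toBlocks]
    simp [fromBlocks_multiply, hblocks.2.1, hblocks.2.2.2]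
  simpa using congrArg det hmul

theorem sign_mul_det_mul_det_submatrix_inr {p q ι : Type*} [Fintype p] [Fintype q] [Fintype ι]
    [DecidableEq p] [DecidableEq q] [DecidableEq ι] (e e' : p ⊕ q ≃ ι) {A B : Matrix ι ι R}
    (h : A * B = 1) :
    Equiv.Perm.sign (e.symm.trans e') * A.det *
        (B.submatrix (e' ∘ Sum.inr) (e ∘ Sum.inr)).det =
      (A.submatrix (e ∘ Sum.inl) (e' ∘ Sum.inl)).det := by
  have hmul : A.submatrix e e' * B.submatrix e' e = 1 := by
    rw [submatrix_mul_equiv, h, submatrix_one_equiv]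
  have hA : A.submatrix e e' = (A.submatrix id (e.symm.trans e')).submatrix e e := by
    ext; simp
  rw [← det_permute', ← det_submatrix_equiv_self e, ← hA]
  exact det_mul_det_toBlocks₂₂ hmul

theorem coe_finRotate_pow_apply {L : ℕ} (k : ℕ) (j : Fin L) :
    ((finRotate L ^ k) j : ℕ) = (j + k) % L := by
  have := j.neZero
  induction k with
  | zero => simp [Nat.mod_eq_of_lt j.isLt]
  | succ k ih =>
    rw [pow_succ', Equiv.Perm.mul_apply, finRotate_apply, Fin.val_add, ih, Fin.val_one',
      ← Nat.add_mod, add_assoc]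

theorem sign_finRotate_pow (n m : ℕ) :
    Equiv.Perm.sign (finRotate (n + m) ^ m) = (-1) ^ (n * m) := by
  rcases m with _ | m
  · simp
  · rw [map_pow, sign_finRotate, ← pow_mul, show (n + (m + 1) - 1) * (m + 1) =
      n * (m + 1) + m * (m + 1) by rw [← add_assoc, Nat.add_sub_cancel, add_mul], pow_add,
      (Nat.even_mul_succ_self m).neg_one_pow, mul_one]

theorem det_submatrix_castAdd_addNat {n m : ℕ} {A B : Matrix (Fin (n + m)) (Fin (n + m)) R}
    (h : A * B = 1) :
    (A.submatrix (Fin.castAdd m) (Fin.addNat · m)).det = (-1) ^ (n * m) * A.det *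
      (B.submatrix (Fin.castLE (Nat.le_add_left m n)) (Fin.natAdd n)).det := by
  let e : Fin n ⊕ Fin m ≃ Fin (n + m) := finSumFinEquiv
  let e' : Fin n ⊕ Fin m ≃ Fin (n + m) := e.trans (finRotate (n + m) ^ m)
  have hsign : Equiv.Perm.sign (e.symm.trans e') = (-1) ^ (n * m) := by
    rw [← sign_finRotate_pow]
    congr 1
    ext; simp [e']
  have hcastAdd : e ∘ Sum.inl = Fin.castAdd m := rfl
  have hnatAdd : e ∘ Sum.inr = Fin.natAdd n := rfl
  have hinl : e' ∘ Sum.inl = (Fin.addNat · m) := by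
    ext j
    simp [e', e, coe_finRotate_pow_apply, Nat.mod_eq_of_lt]
  have hinr : e' ∘ Sum.inr = Fin.castLE (Nat.le_add_left m n) := by
    ext j
    have hj : n + j + m = j + (n + m) := by ring
    have hjlt : (j : ℕ) < n + m := j.isLt.trans_le (Nat.le_add_left m n)
    simp [e', e, coe_finRotate_pow_apply, hj, Nat.mod_eq_of_lt hjlt]
  have hminor := sign_mul_det_mul_det_submatrix_inr e e' h
  rw [hsign, hinl, hinr, hcastAdd, hnatAdd] at hminor
  simpa using hminor.symm

theorem det_neg_one_pow_mul {m : ℕ} (n : ℕ) (M : Matrix (Fin m) (Fin m) R) :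
    (of fun k i : Fin m ↦ (-1) ^ (k + (n + i) : ℕ) * M k i).det = (-1) ^ (n * m) * M.det := by
  have hsplit : (of fun k i : Fin m ↦ (-1) ^ (k + (n + i) : ℕ) * M k i) = of fun k i : Fin m ↦
      (-1) ^ (k : ℕ) * (of fun k i : Fin m ↦ (-1) ^ (n + i : ℕ) * M k i) k i := by
    ext k i
    simp only [of_apply, pow_add, mul_assoc]
  have hsquare (k : ℕ) : (-1 : R) ^ k * (-1) ^ (n + k) = (-1) ^ n := by
    rw [← pow_add, add_left_comm, pow_add, Even.neg_one_pow ⟨k, rfl⟩, mul_one]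
  rw [hsplit, det_mul_column, det_mul_row, ← mul_assoc, ← prod_mul_distrib]
  simp only [hsquare, prod_const, card_univ, Fintype.card_fin, pow_mul]

theorem det_of_rev_rev {m : ℕ} (M : Matrix (Fin m) (Fin m) R) :
    (of fun k i : Fin m ↦ M i.rev k.rev).det = M.det := by
  rw [← det_transpose M, ← det_submatrix_equiv_self Fin.revPerm Mᵀ]
  rfl

theorem det_minor_eq_det_mul_det_minor {n m : ℕ} {A C : Matrix (Fin (n + m)) (Fin (n + m)) R}
    (h : A * of (fun k l : Fin (n + m) ↦ (-1) ^ (k + l : ℕ) * C l.rev k.rev) = 1) :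
    (A.submatrix (Fin.castAdd m) (Fin.addNat · m)).det =
      A.det * (C.submatrix (Fin.castLE (Nat.le_add_left m n)) (Fin.natAdd n)).det := by
  set minor := C.submatrix (Fin.castLE (Nat.le_add_left m n)) (Fin.natAdd n) with hminor
  have hsub : (of fun k l : Fin (n + m) ↦ (-1) ^ (k + l : ℕ) * C l.rev k.rev).submatrix
        (Fin.castLE (Nat.le_add_left m n)) (Fin.natAdd n) = of fun k i : Fin m ↦
      (-1) ^ (k + (n + i) : ℕ) * (of fun k i : Fin m ↦ minor i.rev k.rev) k i := by
    ext k i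
    have hcol : (Fin.castLE (Nat.le_add_left m n) k).rev = Fin.natAdd n k.rev := by
      ext
      simp only [Fin.val_rev, Fin.val_castLE, Fin.val_natAdd]
      omega
    have hrow : (Fin.natAdd n i).rev = Fin.castLE (Nat.le_add_left m n) i.rev := by
      ext
      simp only [Fin.val_rev, Fin.val_castLE, Fin.val_natAdd]
      omega
    simp [hminor, hcol, hrow]
  rw [det_submatrix_castAdd_addNat h, hsub, det_neg_one_pow_mul, det_of_rev_rev]
  linear_combination A.det * minor.det *
    (Even.neg_one_pow ⟨n * m, rfl⟩ : (-1 : R) ^ (n * m + n * m) = 1)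

end ComplementaryMinors

section Casorati

/-- The `s`-th Newton coefficient at `x` of `h^{*,α,c,N}_k` along the quadratic lattice: each step
of differencing lowers the degree and shifts the parameters, and the coefficients beyond the degree
vanish. -/
noncomputable def dualHahnNewtonCoeff (α c N : ℝ) (k s : ℕ) (x : ℝ) : ℝ :=
  if s ≤ k then latticeDualHahn (α - s) (c + s) (N - s) (k - s) x else 0

/-- The matrix of Newton coefficients of the first `L` dual Hahn polynomials at the lattice point
`x`, with one column for each polynomial. -/
noncomputable def dualHahnNewtonMatrix (α c N x : ℝ) (L : ℕ) : Matrix (Fin L) (Fin L) ℝ :=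
  of fun s k ↦ dualHahnNewtonCoeff α c N k s x

variable (α c N x : ℝ)

theorem dualHahnNewtonMatrix_apply {L : ℕ} (s k : Fin L) :
    dualHahnNewtonMatrix α c N x L s k =
      if s ≤ k then latticeDualHahn (α - s) (c + s) (N - s) (k - s) x else 0 :=
  rfl

theorem latticeDualHahn_zero : latticeDualHahn α c N 0 x = 1 := by
  simp [latticeDualHahn, dualHahn, poch_zero, fpol]

theorem dualHahnNewtonCoeff_forward_difference (k s : ℕ) :
    dualHahnNewtonCoeff α c N k s (x + 1) - dualHahnNewtonCoeff α c N k s x =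
      (2 * x + (α + c - N) + s + 1) * dualHahnNewtonCoeff α c N k (s + 1) x := by
  rcases lt_trichotomy s k with hsk | rfl | hks
  · obtain ⟨r, rfl⟩ := Nat.exists_eq_add_of_lt hsk
    rw [dualHahnNewtonCoeff, dualHahnNewtonCoeff, dualHahnNewtonCoeff, if_pos hsk.le,
      if_pos hsk.le, if_pos (Nat.succ_le_of_lt hsk), show s + r + 1 - s = r + 1 by omega,
      show s + r + 1 - (s + 1) = r by omega, latticeDualHahn_forward_difference, Nat.cast_succ,
      ← sub_sub α, ← add_assoc c, ← sub_sub N]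
    ring
  · simp [dualHahnNewtonCoeff, latticeDualHahn_zero]
  · simp [dualHahnNewtonCoeff, hks.not_ge, (hks.trans s.lt_succ_self).not_ge]

theorem prod_Icc_one_pred {M : Type*} [CommMonoid M] {f : ℕ → M} (h₀ : f 0 = 1) (n : ℕ) :
    ∏ l ∈ Icc 1 (n - 1), f l = ∏ l : Fin n, f l := by
  rw [Fin.prod_univ_eq_prod_range]
  refine prod_subset (fun l hl ↦ ?_) fun l hl hl' ↦ ?_
  · simp only [mem_Icc, mem_range] at hl ⊢
    omega
  · have : l = 0 := by
      simp only [mem_Icc, mem_range] at hl hl'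
      omega
    rw [this, h₀]

theorem dualHahnCasorati_eq_det_newton {n m : ℕ}
    (h : ∏ l ∈ Icc 1 (n - 1), poch (2 * x + α + c - N + l) l ≠ 0) :
    dualHahnCasorati α c N n m x =
      (of fun i j : Fin n ↦ dualHahnNewtonCoeff α c N (m + j) i x).det := by
  have hentry (k : ℕ) (y : ℝ) :
      dualHahn α c N k (y * (y + α + c - N)) = dualHahnNewtonCoeff α c N k 0 y := by
    simp [dualHahnNewtonCoeff, latticeDualHahn]
  simp only [dualHahnCasorati, hentry]
  rw [det_quadratic_newton (g := fun j s x ↦ dualHahnNewtonCoeff α c N (m + j) s x)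
    fun j s x ↦ dualHahnNewtonCoeff_forward_difference α c N x (m + j) s]
  have hprod := prod_Icc_one_pred (f := fun l ↦ poch (2 * x + α + c - N + l) l) (poch_zero _) n
  simp only [hprod, ← add_assoc, ← add_sub_assoc] at h ⊢
  rw [mul_div_cancel_left₀ _ h]

theorem det_dualHahnNewtonMatrix (L : ℕ) : (dualHahnNewtonMatrix α c N x L).det = 1 := by
  rw [det_of_isUpperTriangular]
  · simp [dualHahnNewtonMatrix, dualHahnNewtonCoeff, latticeDualHahn_zero]
  · intro s k hks
    exact if_neg (not_le.mpr hks)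

theorem dualHahnNewtonMatrix_rev_rev {L : ℕ} (k l : Fin L) :
    dualHahnNewtonMatrix α c N x L l.rev k.rev =
      if k ≤ l then
        latticeDualHahn (α - (L - (l + 1))) (c + (L - (l + 1))) (N - (L - (l + 1))) (l - k) x
      else 0 := by
  have hl : ((l.rev : ℕ) : ℝ) = L - (l + 1) := by
    rw [Fin.val_rev, Nat.cast_sub (Nat.succ_le_of_lt l.isLt), Nat.cast_add_one]
  have hsub : (k.rev - l.rev : ℕ) = l - k := by
    simp only [Fin.val_rev]
    omega
  simp only [dualHahnNewtonMatrix_apply, Fin.rev_le_rev, hl, hsub]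

theorem sum_fin_latticeDualHahn_mul {L : ℕ} {i l : Fin L} (hil : i ≤ l) :
    ∑ k, (if i ≤ k then (-1) ^ (k - i : ℕ) * latticeDualHahn α c N (k - i) x else 0) *
        (if k ≤ l then latticeDualHahn (1 + (l - i) - α) (1 - c - (l - i)) (1 + (l - i) - N)
          (l - k) (-x) else 0) =
      (1 : Matrix (Fin L) (Fin L) ℝ) i l := by
  rw [sum_fin_toeplitz_mul (fun p ↦ (-1) ^ p * latticeDualHahn α c N p x)
      (fun q ↦ latticeDualHahn (1 + (l - i) - α) (1 - c - (l - i)) (1 + (l - i) - N) q (-x)) hil,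
    ← Nat.cast_sub hil, sum_antidiagonal_latticeDualHahn_mul, one_apply]
  congr 1
  rw [eq_iff_iff]
  omega

theorem dualHahnNewtonMatrix_mul_dual (L : ℕ) :
    dualHahnNewtonMatrix (α + L) (c - L) (N + L) x L *
      of (fun k l : Fin L ↦ (-1) ^ (k + l : ℕ) *
        dualHahnNewtonMatrix (-α) (2 - c) (-N) (-x) L l.rev k.rev) = 1 := by
  ext i l
  simp only [mul_apply, of_apply, dualHahnNewtonMatrix_rev_rev]
  simp only [dualHahnNewtonMatrix_apply]
  rcases lt_or_ge l i with hli | hil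
  · rw [one_apply_ne hli.ne', sum_eq_zero fun k _ ↦ ?_]
    rcases lt_or_ge k i with hki | hik
    · rw [if_neg hki.not_ge, zero_mul]
    · rw [if_neg (hli.trans_le hik).not_ge, mul_zero, mul_zero]
  · have hα : -α - (L - (l + 1)) = 1 + (l - i) - (α + L - i) := by ring
    have hc : 2 - c + (L - (l + 1)) = 1 - (c - L + i) - (l - i) := by ring
    have hN : -N - (L - (l + 1)) = 1 + (l - i) - (N + L - i) := by ring
    have hsign {k : Fin L} (hik : i ≤ k) :
        (-1 : ℝ) ^ (k + l : ℕ) = (-1) ^ (i + l : ℕ) * (-1) ^ (k - i : ℕ) := by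
      rw [← pow_add]
      congr 1
      omega
    trans (-1) ^ (i + l : ℕ) * (1 : Matrix (Fin L) (Fin L) ℝ) i l
    · rw [← sum_fin_latticeDualHahn_mul (α + L - i) (c - L + i) (N + L - i) x hil, mul_sum]
      refine sum_congr rfl fun k _ ↦ ?_
      rw [hα, hc, hN]
      split_ifs with hik
      · rw [hsign hik]
        ring
      all_goals ring
    · rw [one_apply]
      split_ifs with h
      · rw [h, Even.neg_one_pow ⟨_, rfl⟩, one_mul]
      · rw [mul_zero]

end Casorati

/-- the symmetry of normalized Casorati determinants of dual
Hahn polynomials. -/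
theorem dualHahn_casorati_symmetry (n m : ℕ) (x α c N : ℝ)
    (h1 : (∏ l ∈ Finset.Icc 1 (n - 1),
      poch (2 * x + α + c - N - n - m + l) l) ≠ 0)
    (h2 : (∏ l ∈ Finset.Icc 1 (m - 1),
      poch (-(2 * x) + 2 - (α + c - N) + l) l) ≠ 0) :
    dualHahnCasorati (α + n + m) (c - n - m) (N + n + m) n m x
    = dualHahnCasorati (-α) (2 - c) (-N) m n (-x) := by
  have h1' : ∏ l ∈ Icc 1 (n - 1),
      poch (2 * x + (α + n + m) + (c - n - m) - (N + n + m) + l) l ≠ 0 := by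
    convert h1 using 4
    ring
  have h2' : ∏ l ∈ Icc 1 (m - 1), poch (2 * -x + -α + (2 - c) - -N + l) l ≠ 0 := by
    convert h2 using 4
    ring
  have hminor := det_minor_eq_det_mul_det_minor (dualHahnNewtonMatrix_mul_dual α c N x (n + m))
  rw [det_dualHahnNewtonMatrix, one_mul] at hminor
  rw [dualHahnCasorati_eq_det_newton _ _ _ _ h1', dualHahnCasorati_eq_det_newton _ _ _ _ h2']
  simpa [submatrix, dualHahnNewtonMatrix, add_comm, ← add_assoc, ← sub_sub] using hminor
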